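/- arXiv:1711.11246 — 5 statements merged into one kernel-verified Lean document; each statement's English description precedes it below -/
import Mathlib

section
/- Let (R₁, R₀, g, res, tr) be a C₂-Green functor. Then the set F₁ = {(n,x) ∈ R₁ × R₁ : res(n) = res(x)²} is a commutative ring under the coordinatewise multiplication (n,x)·(n',x') = (n·n', x·x') and the addition (n,x) + (n',x') = (n + n' + tr(res(x)·res(x')), x + x'), with zero element (0,0) and multiplicative unit (1,1); in particular these operations are well defined, i.e. their outputs again satisfy the defining condition of F₁, and every element has an additive inverse. -/
/-!
The twisted addition is the one for which `n` behaves like a norm of `x`: the term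
`tr (res x * res x')` restricts to the cross term `2 * res x * res x'` of a square, because
restrictions are `g`-fixed; this gives closure under addition. Associativity and commutativity
of addition come from additivity of `tr`, the inverse of `(n, x)` is
`(-n + tr (res x * res x), -x)`, and distributivity is the Frobenius relation combined with
the defining condition `res n = res x ^ 2`.
-/

/-- The set `mem`, equipped with the operations `add` and `mul` and the distinguished
elements `zero` and `one`, forms a commutative ring: the operations are well defined
(i.e. closed on `mem`), all commutative-ring axioms hold, and every element has an
additive inverse. -/
def IsCommRingOn {A : Type*} (mem : A → Prop) (add mul : A → A → A) (zero one : A) : Prop :=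
  mem zero ∧ mem one ∧
  (∀ p q, mem p → mem q → mem (add p q)) ∧
  (∀ p q, mem p → mem q → mem (mul p q)) ∧
  (∀ p q r, mem p → mem q → mem r → add (add p q) r = add p (add q r)) ∧
  (∀ p q, mem p → mem q → add p q = add q p) ∧
  (∀ p, mem p → add zero p = p) ∧
  (∀ p, mem p → ∃ q, mem q ∧ add p q = zero) ∧
  (∀ p q r, mem p → mem q → mem r → mul (mul p q) r = mul p (mul q r)) ∧
  (∀ p q, mem p → mem q → mul p q = mul q p) ∧
  (∀ p, mem p → mul one p = p) ∧
  (∀ p q r, mem p → mem q → mem r → mul p (add q r) = add (mul p q) (mul p r))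

/-- For a `C₂`-Green functor `(R₁, R₀, g, res, tr)`, the set
`F₁ = {(n,x) ∈ R₁ × R₁ : res n = (res x)²}` is a commutative ring under coordinatewise
multiplication and the twisted addition
`(n,x) + (n',x') = (n + n' + tr (res x · res x'), x + x')`,
with zero `(0,0)` and unit `(1,1)`. -/
theorem F1_isCommRing (R₁ R₀ : Type*) [CommRing R₁] [CommRing R₀]
    (g : R₀ →+* R₀) (res : R₁ →+* R₀) (tr : R₀ →+ R₁)
    (g_invol : ∀ x, g (g x) = x)
    (g_res : ∀ a, g (res a) = res a)
    (tr_g : ∀ x, tr (g x) = tr x)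
    (res_tr : ∀ x, res (tr x) = x + g x)
    (frob : ∀ a x, a * tr x = tr (res a * x)) :
    IsCommRingOn (fun p : R₁ × R₁ => res p.1 = (res p.2) ^ 2)
      (fun p q => (p.1 + q.1 + tr (res p.2 * res q.2), p.2 + q.2))
      (fun p q => (p.1 * q.1, p.2 * q.2))
      ((0, 0) : R₁ × R₁) ((1, 1) : R₁ × R₁) := by
  refine ⟨?_, ?_, ?_, ?_, ?_, ?_, ?_, ?_, ?_, ?_, ?_, ?_⟩
  · simp
  · simp
  · -- `res (tr (y * z)) = 2 * y * z` for `g`-fixed `y`, `z`: the cross term of `(y + z) ^ 2`.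
    rintro ⟨n, x⟩ ⟨m, y⟩ hp hq
    simp only at hp hq ⊢
    simp only [map_add, res_tr, map_mul, g_res, hp, hq]
    ring
  · rintro ⟨n, x⟩ ⟨m, y⟩ hp hq
    simp only at hp hq ⊢
    simp only [map_mul, hp, hq]
    ring
  · rintro ⟨n, x⟩ ⟨m, y⟩ ⟨k, z⟩ - - -
    ext
    · simp only [map_add, add_mul, mul_add]
      ring
    · exact add_assoc _ _ _
  · rintro ⟨n, x⟩ ⟨m, y⟩ - -
    ext
    · simp only [mul_comm (res y), add_comm m]
    · exact add_comm _ _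
  · rintro ⟨n, x⟩ -
    simp
  · -- The inverse is not `(-n, -x)`: the twist `tr (res x * res (-x))` has to be cancelled.
    rintro ⟨n, x⟩ hp
    simp only at hp
    refine ⟨(-n + tr (res x * res x), -x), ?_, ?_⟩
    · simp only [map_add, map_neg, res_tr, map_mul, g_res, hp]
      ring
    · ext <;> simp
  · rintro ⟨n, x⟩ ⟨m, y⟩ ⟨k, z⟩ - - -
    simp only [mul_assoc]
  · rintro ⟨n, x⟩ ⟨m, y⟩ - -
    simp only [mul_comm]
  · rintro ⟨n, x⟩ -
    simp
  · -- By Frobenius and the condition on `(n, x)`, `n * tr w = tr (res x ^ 2 * w)`.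
    rintro ⟨n, x⟩ ⟨m, y⟩ ⟨k, z⟩ hp - -
    simp only at hp
    ext
    · have h : res x ^ 2 * (res y * res z) = res x * res y * (res x * res z) := by ring
      simp only [mul_add, frob, hp, map_mul, h]
    · exact mul_add _ _ _
end

section
/- Let (R₁, R₀, g, res, tr) be a C₂-Green functor. Then the set F₀ = {(n,x) ∈ R₁ × R₀ : res(n) = x·g(x)} is a commutative ring under the coordinatewise multiplication (n,x)·(n',x') = (n·n', x·x') and the addition (n,x) + (n',x') = (n + n' + tr(x·g(x')), x + x'), with zero element (0,0) and multiplicative unit (1,1); moreover the map G : F₀ → F₀ defined by G(n,x) = (n, g(x)) is a well-defined ring involution of F₀. -/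
/-- For a `C₂`-Green functor `(R₁, R₀, g, res, tr)`, the set
`F₀ = {(n,x) ∈ R₁ × R₀ : res n = x · g x}` is a commutative ring under coordinatewise
multiplication and the twisted addition
`(n,x) + (n',x') = (n + n' + tr (x · g x'), x + x')`, with zero `(0,0)` and unit `(1,1)`;
moreover `G(n,x) = (n, g x)` is a well-defined ring involution of `F₀`. -/
theorem F0_isCommRing_with_involution (R₁ R₀ : Type*) [CommRing R₁] [CommRing R₀]
    (g : R₀ →+* R₀) (res : R₁ →+* R₀) (tr : R₀ →+ R₁)
    (g_invol : ∀ x, g (g x) = x)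
    (g_res : ∀ a, g (res a) = res a)
    (tr_g : ∀ x, tr (g x) = tr x)
    (res_tr : ∀ x, res (tr x) = x + g x)
    (frob : ∀ a x, a * tr x = tr (res a * x)) :
    IsCommRingOn (fun p : R₁ × R₀ => res p.1 = p.2 * g p.2)
      (fun p q => (p.1 + q.1 + tr (p.2 * g q.2), p.2 + q.2))
      (fun p q => (p.1 * q.1, p.2 * q.2))
      ((0, 0) : R₁ × R₀) ((1, 1) : R₁ × R₀)
    ∧
    -- G is well defined on F₀
    (∀ p : R₁ × R₀, res p.1 = p.2 * g p.2 → res (p.1) = g p.2 * g (g p.2)) ∧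
    -- G is an involution
    (∀ p : R₁ × R₀, ((p.1, g (g p.2)) : R₁ × R₀) = p) ∧
    -- G is a ring homomorphism for the F₀ structure
    (((1 : R₁), g (1 : R₀)) = ((1, 1) : R₁ × R₀)) ∧
    (∀ p q : R₁ × R₀, res p.1 = p.2 * g p.2 → res q.1 = q.2 * g q.2 →
      ((p.1 + q.1 + tr (p.2 * g q.2), g (p.2 + q.2)) : R₁ × R₀)
        = (p.1 + q.1 + tr (g p.2 * g (g q.2)), g p.2 + g q.2)) ∧
    (∀ p q : R₁ × R₀, res p.1 = p.2 * g p.2 → res q.1 = q.2 * g q.2 →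
      ((p.1 * q.1, g (p.2 * q.2)) : R₁ × R₀) = (p.1 * q.1, g p.2 * g q.2)) := by
  -- Symmetry of the correction term in the addition.
  have tr_comm : ∀ x y, tr (x * g y) = tr (y * g x) := fun x y => by
    rw [← tr_g, map_mul, g_invol, mul_comm]
  refine ⟨⟨?_, ?_, ?_, ?_, ?_, ?_, ?_, ?_, ?_, ?_, ?_, ?_⟩, ?_, ?_, ?_, ?_, ?_⟩
  · simp
  · simp
  · rintro ⟨n, x⟩ ⟨m, y⟩ hp hq
    simp only [map_add, res_tr, map_mul, g_invol] at *
    rw [hp, hq]; ring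
  · rintro ⟨n, x⟩ ⟨m, y⟩ hp hq
    simp only [map_mul] at *
    rw [hp, hq]; ring
  · rintro ⟨n, x⟩ ⟨m, y⟩ ⟨l, z⟩ - - -
    ext
    · simp only [map_add, add_mul, mul_add]; ring
    · exact add_assoc _ _ _
  · rintro ⟨n, x⟩ ⟨m, y⟩ - -
    ext
    · simp only [tr_comm x y]; ring
    · exact add_comm _ _
  · rintro ⟨n, x⟩ -
    simp
  · rintro ⟨n, x⟩ hp
    -- Solving `n + m + tr (x * g (-x)) = 0` for the first coordinate `m` of the inverse.
    refine ⟨(-n + tr (x * g x), -x), ?_, ?_⟩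
    · simp only [map_add, map_neg, res_tr, map_mul, g_invol] at *
      rw [hp]; ring
    · ext <;> simp
  · rintro ⟨n, x⟩ ⟨m, y⟩ ⟨l, z⟩ - - -
    simp only [mul_assoc]
  · rintro ⟨n, x⟩ ⟨m, y⟩ - -
    simp only [mul_comm]
  · rintro ⟨n, x⟩ -
    simp only [one_mul]
  · rintro ⟨n, x⟩ ⟨m, y⟩ ⟨l, z⟩ hp - -
    simp only at hp
    ext
    · -- Frobenius reciprocity, with `res n = x * g x`, turns `n * tr (y * g z)` into
      -- `tr (x * y * g (x * z))`.
      have h : x * g x * (y * g z) = x * y * (g x * g z) := by ring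
      simp only [mul_add, frob, hp, map_mul, h]
    · exact mul_add _ _ _
  · intro p hp
    rw [g_invol, hp, mul_comm]
  · intro p
    rw [g_invol]
  · rw [map_one]
  · intro p q _ _
    -- The corrections agree because `g p.2 * g (g q.2) = g (p.2 * g q.2)` and `tr ∘ g = tr`.
    rw [← map_mul, tr_g, map_add]
  · intro p q _ _
    rw [map_mul]
end

section
/- Let (R₁, R₀, g, res, tr) be a C₂-Green functor. Define F₁ = {(n,x) ∈ R₁ × R₁ : res(n) = res(x)²} and F₀ = {(n,x) ∈ R₁ × R₀ : res(n) = x·g(x)} with coordinatewise multiplication, additions (n,x)+(n',x') = (n+n'+tr(res(x)·res(x')), x+x') on F₁ and (n,x)+(n',x') = (n+n'+tr(x·g(x')), x+x') on F₀, involution G(n,x) = (n, g(x)) on F₀, restriction Res(n,x) = (n, res(x)), and transfer Tr(n,x) = (2n + tr(x²), tr(x)). Then Tr is well defined (its output satisfies the defining condition of F₁), and the data (F₁, F₀, G, Res, Tr) is itself a C₂-Green functor; in particular Tr is additive, Tr ∘ G = Tr, Res(Tr(p)) = p + G(p) for all p ∈ F₀, and q·Tr(p) = Tr(Res(q)·p)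 for all q ∈ F₁, p ∈ F₀. -/
section

variable {R₁ R₀ : Type*} [CommRing R₁] [CommRing R₀]

/-- The twisted addition on `F₁`. -/
def F1add (res : R₁ →+* R₀) (tr : R₀ →+ R₁) (p q : R₁ × R₁) : R₁ × R₁ :=
  (p.1 + q.1 + tr (res p.2 * res q.2), p.2 + q.2)

/-- The twisted addition on `F₀`. -/
def F0add (g : R₀ →+* R₀) (tr : R₀ →+ R₁) (p q : R₁ × R₀) : R₁ × R₀ :=
  (p.1 + q.1 + tr (p.2 * g q.2), p.2 + q.2)

/-- The Weyl action `G` on `F₀`. -/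
def Gmap (g : R₀ →+* R₀) (p : R₁ × R₀) : R₁ × R₀ := (p.1, g p.2)

/-- The restriction `Res : F₁ → F₀`. -/
def Resmap (res : R₁ →+* R₀) (p : R₁ × R₁) : R₁ × R₀ := (p.1, res p.2)

/-- The transfer `Tr : F₀ → F₁`. -/
def Trmap (tr : R₀ →+ R₁) (p : R₁ × R₀) : R₁ × R₁ := (2 * p.1 + tr (p.2 ^ 2), tr p.2)

/-- For a `C₂`-Green functor `(R₁, R₀, g, res, tr)`, the transfer
`Tr(n,x) = (2n + tr(x²), tr x)` is well defined from `F₀` to `F₁`, and the data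
`(F₁, F₀, G, Res, Tr)` is itself a `C₂`-Green functor; in particular `Tr` is additive,
`Tr ∘ G = Tr`, `Res (Tr p) = p + G p`, and `q · Tr p = Tr (Res q · p)`. -/
theorem F_is_Green (g : R₀ →+* R₀) (res : R₁ →+* R₀) (tr : R₀ →+ R₁)
    (g_invol : ∀ x, g (g x) = x)
    (g_res : ∀ a, g (res a) = res a)
    (tr_g : ∀ x, tr (g x) = tr x)
    (res_tr : ∀ x, res (tr x) = x + g x)
    (frob : ∀ a x, a * tr x = tr (res a * x)) :
    -- Tr is well defined: it maps F₀ into F₁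
    (∀ p : R₁ × R₀, res p.1 = p.2 * g p.2 →
      res (Trmap tr p).1 = (res (Trmap tr p).2) ^ 2) ∧
    -- F₁ is a commutative ring
    IsCommRingOn (fun p : R₁ × R₁ => res p.1 = (res p.2) ^ 2)
      (F1add res tr) (fun p q => (p.1 * q.1, p.2 * q.2)) (0, 0) (1, 1) ∧
    -- F₀ is a commutative ring
    IsCommRingOn (fun p : R₁ × R₀ => res p.1 = p.2 * g p.2)
      (F0add g tr) (fun p q => (p.1 * q.1, p.2 * q.2)) (0, 0) (1, 1) ∧
    -- G is a well-defined ring involution of F₀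
    (∀ p : R₁ × R₀, res p.1 = p.2 * g p.2 →
      res (Gmap g p).1 = (Gmap g p).2 * g (Gmap g p).2) ∧
    (∀ p : R₁ × R₀, Gmap g (Gmap g p) = p) ∧
    (Gmap g ((1, 1) : R₁ × R₀) = (1, 1)) ∧
    (∀ p q : R₁ × R₀, res p.1 = p.2 * g p.2 → res q.1 = q.2 * g q.2 →
      Gmap g (F0add g tr p q) = F0add g tr (Gmap g p) (Gmap g q)) ∧
    (∀ p q : R₁ × R₀, Gmap g ((p.1 * q.1, p.2 * q.2) : R₁ × R₀)
      = ((Gmap g p).1 * (Gmap g q).1, (Gmap g p).2 * (Gmap g q).2)) ∧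
    -- Res is a well-defined ring homomorphism F₁ → F₀ with G ∘ Res = Res
    (∀ p : R₁ × R₁, res p.1 = (res p.2) ^ 2 →
      res (Resmap res p).1 = (Resmap res p).2 * g (Resmap res p).2) ∧
    (Resmap res ((1, 1) : R₁ × R₁) = (1, 1)) ∧
    (∀ p q : R₁ × R₁, res p.1 = (res p.2) ^ 2 → res q.1 = (res q.2) ^ 2 →
      Resmap res (F1add res tr p q) = F0add g tr (Resmap res p) (Resmap res q)) ∧
    (∀ p q : R₁ × R₁, Resmap res ((p.1 * q.1, p.2 * q.2) : R₁ × R₁)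
      = ((Resmap res p).1 * (Resmap res q).1, (Resmap res p).2 * (Resmap res q).2)) ∧
    (∀ p : R₁ × R₁, res p.1 = (res p.2) ^ 2 → Gmap g (Resmap res p) = Resmap res p) ∧
    -- Tr is additive
    (Trmap tr ((0, 0) : R₁ × R₀) = (0, 0)) ∧
    (∀ p q : R₁ × R₀, res p.1 = p.2 * g p.2 → res q.1 = q.2 * g q.2 →
      Trmap tr (F0add g tr p q) = F1add res tr (Trmap tr p) (Trmap tr q)) ∧
    -- Tr ∘ G = Tr
    (∀ p : R₁ × R₀, Trmap tr (Gmap g p) = Trmap tr p) ∧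
    -- Res (Tr p) = p + G p
    (∀ p : R₁ × R₀, res p.1 = p.2 * g p.2 →
      Resmap res (Trmap tr p) = F0add g tr p (Gmap g p)) ∧
    -- Frobenius: q · Tr p = Tr (Res q · p)
    (∀ (q : R₁ × R₁) (p : R₁ × R₀), res q.1 = (res q.2) ^ 2 → res p.1 = p.2 * g p.2 →
      (q.1 * (Trmap tr p).1, q.2 * (Trmap tr p).2)
        = Trmap tr ((Resmap res q).1 * p.1, (Resmap res q).2 * p.2)) := by
  have tr_mul_g : ∀ x y, tr (x * g y) = tr (y * g x) := fun x y => by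
    rw [← tr_g (x * g y), map_mul, g_invol, mul_comm]
  have tr_gg : ∀ x y, tr (g x * g y) = tr (x * y) := fun x y => by
    rw [← map_mul, tr_g]
  refine ⟨?_, ⟨?_, ?_, ?_, ?_, ?_, ?_, ?_, ?_, ?_, ?_, ?_, ?_⟩,
    ⟨?_, ?_, ?_, ?_, ?_, ?_, ?_, ?_, ?_, ?_, ?_, ?_⟩, ?_, ?_, ?_, ?_, ?_, ?_, ?_, ?_, ?_, ?_, ?_,
    ?_, ?_, ?_, ?_⟩
  · rintro ⟨n, x⟩ h
    simp only [Trmap, map_add, map_mul, map_ofNat, res_tr, map_pow] at h ⊢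
    rw [h]; ring
  -- the commutative ring `F₁`
  · simp
  · simp
  · rintro ⟨n, x⟩ ⟨m, y⟩ hp hq
    simp only [F1add, map_add, res_tr, map_mul, g_res] at hp hq ⊢
    rw [hp, hq]; ring
  · rintro ⟨n, x⟩ ⟨m, y⟩ hp hq
    simp only [map_mul] at hp hq ⊢
    rw [hp, hq]; ring
  · rintro ⟨n, x⟩ ⟨m, y⟩ ⟨k, z⟩ - - -
    ext <;> simp only [F1add, map_add, add_mul, mul_add] <;> ring
  · rintro ⟨n, x⟩ ⟨m, y⟩ - -
    ext <;> simp only [F1add]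
    · rw [mul_comm (res x)]; ring
    · ring
  · rintro ⟨n, x⟩ -
    simp [F1add]
  · rintro ⟨n, x⟩ hp
    refine ⟨(-n + tr (res x * res x), -x), ?_, ?_⟩
    · simp only [map_add, map_neg, res_tr, map_mul, g_res] at hp ⊢
      rw [hp]; ring
    · simp [F1add]
  · rintro ⟨n, x⟩ ⟨m, y⟩ ⟨k, z⟩ - - -
    simp only [mul_assoc]
  · rintro ⟨n, x⟩ ⟨m, y⟩ - -
    simp only [mul_comm]
  · rintro ⟨n, x⟩ -
    simp
  · rintro ⟨n, x⟩ ⟨m, y⟩ ⟨k, z⟩ hp - -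
    simp only at hp
    ext <;> simp only [F1add, mul_add, frob, hp, map_mul]
    congr 2; ring
  -- the commutative ring `F₀`
  · simp
  · simp
  · rintro ⟨n, x⟩ ⟨m, y⟩ hp hq
    simp only [F0add, map_add, res_tr, map_mul, g_invol] at hp hq ⊢
    rw [hp, hq]; ring
  · rintro ⟨n, x⟩ ⟨m, y⟩ hp hq
    simp only [map_mul] at hp hq ⊢
    rw [hp, hq]; ring
  · rintro ⟨n, x⟩ ⟨m, y⟩ ⟨k, z⟩ - - -
    ext <;> simp only [F0add, map_add, add_mul, mul_add] <;> ring
  · rintro ⟨n, x⟩ ⟨m, y⟩ - -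
    ext <;> simp only [F0add]
    · rw [tr_mul_g x]; ring
    · ring
  · rintro ⟨n, x⟩ -
    simp [F0add]
  · rintro ⟨n, x⟩ hp
    refine ⟨(-n + tr (x * g x), -x), ?_, ?_⟩
    · simp only [map_add, map_neg, res_tr, map_mul, g_invol] at hp ⊢
      rw [hp]; ring
    · simp [F0add]
  · rintro ⟨n, x⟩ ⟨m, y⟩ ⟨k, z⟩ - - -
    simp only [mul_assoc]
  · rintro ⟨n, x⟩ ⟨m, y⟩ - -
    simp only [mul_comm]
  · rintro ⟨n, x⟩ -
    simp
  · rintro ⟨n, x⟩ ⟨m, y⟩ ⟨k, z⟩ hp - -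
    simp only at hp
    ext <;> simp only [F0add, mul_add, frob, hp, map_mul]
    congr 2; ring
  -- the involution `G`
  · rintro ⟨n, x⟩ hp
    simp only [Gmap, g_invol] at hp ⊢
    rw [hp, mul_comm]
  · rintro ⟨n, x⟩
    simp only [Gmap, g_invol]
  · simp [Gmap]
  · rintro ⟨n, x⟩ ⟨m, y⟩ - -
    simp only [Gmap, F0add, map_add, tr_gg]
  · rintro ⟨n, x⟩ ⟨m, y⟩
    simp only [Gmap, map_mul]
  -- the restriction `Res`
  · rintro ⟨n, x⟩ hp
    simp only [Resmap, g_res] at hp ⊢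
    rw [hp, sq]
  · simp [Resmap]
  · rintro ⟨n, x⟩ ⟨m, y⟩ - -
    simp only [Resmap, F0add, F1add, map_add, g_res]
  · rintro ⟨n, x⟩ ⟨m, y⟩
    simp only [Resmap, map_mul]
  · rintro ⟨n, x⟩ -
    simp only [Resmap, Gmap, g_res]
  -- the transfer `Tr`
  · simp [Trmap]
  · rintro ⟨n, x⟩ ⟨m, y⟩ - -
    ext <;> simp only [Trmap, F0add, F1add, res_tr, map_add, add_mul, mul_add, sq]
    rw [tr_gg, mul_comm (g x) y, tr_mul_g y x, mul_comm y x]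
    ring
  · rintro ⟨n, x⟩
    simp only [Trmap, Gmap, tr_g, ← map_pow]
  · rintro ⟨n, x⟩ -
    ext <;> simp only [Trmap, Gmap, Resmap, F0add, res_tr, g_invol]
    rw [sq]; ring
  · rintro ⟨k, y⟩ ⟨n, x⟩ hq -
    simp only at hq
    ext <;> simp only [Trmap, Resmap, mul_add, frob, hq, mul_pow]
    ring

end
end

section
/- Let (R₁, R₀, g, res, tr) be a C₂-Green functor, and let (F₁, F₀, G, Res, Tr) be the C₂-Green functor with F₁ = {(n,x) ∈ R₁ × R₁ : res(n) = res(x)²}, F₀ = {(n,x) ∈ R₁ × R₀ : res(n) = x·g(x)}, coordinatewise multiplication, additions (n,x)+(n',x') = (n+n'+tr(res(x)·res(x')), x+x') on F₁ and (n,x)+(n',x') = (n+n'+tr(x·g(x')), x+x') on F₀, G(n,x) = (n, g(x)), Res(n,x) = (n, res(x)), and Tr(n,x) = (2n + tr(x²), tr(x)). Then the map N : F₀ → F₁ defined by N(n,x) = (n², n) is well defined (its output satisfies the defining condition of F₁) and makes this C₂-Green functor into a C₂-Tambara functor; in particular N(1,1) = (1,1), N(p·q) = N(p)·N(q), N(G(p))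 = N(p), Res(N(p)) = p·G(p), and N(p+q) = N(p) + N(q) + Tr(p·G(q)) for all p, q ∈ F₀. -/
/-!
Apart from the sum formula, every identity is immediate from the definitions and the condition
`res n = x * g x` defining `F₀`. For the sum formula, let `p = (n, x)`, `q = (m, y)` and
`z = x * g y`. The second coordinates agree by the definition of the sum in `F₀`; the first
coordinates agree when `(n + m + tr z) ^ 2` equals
`n ^ 2 + m ^ 2 + tr (res n * res m) + 2 * (n * m) + tr (z ^ 2) + tr (res (n + m) * res (tr z))`.
Frobenius reciprocity gives `(tr z) ^ 2 = tr (z ^ 2) + tr (z * g z)` (`tr_sq`), where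
`z * g z = res n * res m` by the conditions defining `F₀`, and it gives
`tr (res a * res (tr z)) = 2 * (a * tr z)` (`tr_res_mul_res_tr`), applied with `a = n + m`.
-/

section

variable {R₁ R₀ : Type*} [CommRing R₁] [CommRing R₀]

/-- The norm `N : F₀ → F₁`. -/
def Nmap (p : R₁ × R₀) : R₁ × R₁ := (p.1 ^ 2, p.1)

lemma tr_sq {R₁ R₀ : Type*} [CommRing R₁] [CommRing R₀]
    (g : R₀ →+* R₀) (res : R₁ →+* R₀) (tr : R₀ →+ R₁)
    (res_tr : ∀ x, res (tr x) = x + g x)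
    (frob : ∀ a x, a * tr x = tr (res a * x)) (z : R₀) :
    tr z ^ 2 = tr (z ^ 2) + tr (z * g z) := by
  rw [sq, frob, res_tr, ← map_add]
  congr 1
  ring

lemma tr_res_mul_res_tr {R₁ R₀ : Type*} [CommRing R₁] [CommRing R₀]
    (g : R₀ →+* R₀) (res : R₁ →+* R₀) (tr : R₀ →+ R₁)
    (tr_g : ∀ x, tr (g x) = tr x)
    (res_tr : ∀ x, res (tr x) = x + g x)
    (frob : ∀ a x, a * tr x = tr (res a * x)) (a : R₁) (z : R₀) :
    tr (res a * res (tr z)) = 2 * (a * tr z) := by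
  rw [← frob, res_tr, map_add, tr_g]
  ring

/-- For a `C₂`-Green functor `(R₁, R₀, g, res, tr)`, the norm `N(n,x) = (n², n)` is well
defined from `F₀` to `F₁` and makes the `C₂`-Green functor `(F₁, F₀, G, Res, Tr)` into a
`C₂`-Tambara functor; in particular `N(1,1) = (1,1)`, `N(p·q) = N(p)·N(q)`,
`N(G p) = N p`, `Res(N p) = p · G p`, and `N(p+q) = N p + N q + Tr (p · G q)`. -/
theorem F_is_Tambara (g : R₀ →+* R₀) (res : R₁ →+* R₀) (tr : R₀ →+ R₁)
    (g_invol : ∀ x, g (g x) = x)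
    (g_res : ∀ a, g (res a) = res a)
    (tr_g : ∀ x, tr (g x) = tr x)
    (res_tr : ∀ x, res (tr x) = x + g x)
    (frob : ∀ a x, a * tr x = tr (res a * x)) :
    -- N is well defined: it maps F₀ into F₁
    (∀ p : R₁ × R₀, res p.1 = p.2 * g p.2 →
      res (Nmap p).1 = (res (Nmap p).2) ^ 2) ∧
    -- N(1,1) = (1,1)
    (Nmap ((1, 1) : R₁ × R₀) = ((1, 1) : R₁ × R₁)) ∧
    -- N is multiplicative
    (∀ p q : R₁ × R₀, res p.1 = p.2 * g p.2 → res q.1 = q.2 * g q.2 →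
      Nmap ((p.1 * q.1, p.2 * q.2) : R₁ × R₀)
        = ((Nmap p).1 * (Nmap q).1, (Nmap p).2 * (Nmap q).2)) ∧
    -- N ∘ G = N
    (∀ p : R₁ × R₀, res p.1 = p.2 * g p.2 → Nmap (Gmap g p) = Nmap p) ∧
    -- Res (N p) = p · G p
    (∀ p : R₁ × R₀, res p.1 = p.2 * g p.2 →
      Resmap res (Nmap p) = ((p.1 * (Gmap g p).1, p.2 * (Gmap g p).2) : R₁ × R₀)) ∧
    -- N (p + q) = N p + N q + Tr (p · G q)
    (∀ p q : R₁ × R₀, res p.1 = p.2 * g p.2 → res q.1 = q.2 * g q.2 →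
      Nmap (F0add g tr p q)
        = F1add res tr (F1add res tr (Nmap p) (Nmap q))
            (Trmap tr ((p.1 * (Gmap g q).1, p.2 * (Gmap g q).2) : R₁ × R₀))) := by
  refine ⟨?_, ?_, ?_, ?_, ?_, ?_⟩
  · intro p _
    simp [Nmap]
  · simp [Nmap]
  · intro p q _ _
    simp [Nmap, mul_pow]
  · intro p _
    rfl
  · intro p hp
    simp [Nmap, Resmap, Gmap, hp, sq]
  · rintro ⟨n, x⟩ ⟨m, y⟩ hp hq
    simp only at hp hq
    have hz : x * g y * g (x * g y) = res n * res m := by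
      rw [hp, hq, map_mul, g_invol]
      ring
    have h1 := tr_sq g res tr res_tr frob (x * g y)
    rw [hz] at h1
    have h2 := tr_res_mul_res_tr g res tr tr_g res_tr frob (n + m) (x * g y)
    ext
    · simp only [Nmap, F0add, F1add, Trmap, Gmap]
      linear_combination h1 - h2
    · rfl


end
end

section
/- The commutative ring ℤ[T_{i,j} : (i,j) ∈ ℕ × ℕ]/I, where I is the ideal generated by the elements T_{i,j} − T_{j,i} and T_{i,j}·T_{k,l} − T_{i+k,j+l} − T_{i+l,j+k} for all i, j, k, l ∈ ℕ, is free as a ℤ-module with basis the classes of 1 together with the classes of T_{i,j} for all pairs (i,j) with i ≤ j. -/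
/-!
Spanning: the relations rewrite a product of two classes `T_{i,j}` as a sum of two such classes,
and symmetry lets one take `i ≤ j`, so the span of the family contains `1` and is stable under
multiplication by every generator.

Independence: the evaluation `T_{i,j} ↦ xⁱyʲ + xʲyⁱ` in `ℤ[x, y]` respects the relations and
separates the `T_{i,j}` with `i ≤ j`, because `xⁱyʲ` occurs in the image of exactly one of them,
with coefficient `1` or `2`. It does not separate `T_{0,0} ↦ 2` from `1`; for this one uses in
addition the augmentation `T_{i,j} ↦ 0`, which is also compatible with the relations and shows
that the coefficient of `1` in any linear relation vanishes.
-/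

noncomputable section

open MvPolynomial

/-- The generators of the ideal `I`: the symmetry relations `T_{i,j} − T_{j,i}` and the
relations `T_{i,j}·T_{k,l} − T_{i+k,j+l} − T_{i+l,j+k}`. -/
def UgenSet : Set (MvPolynomial (ℕ × ℕ) ℤ) :=
  {p | ∃ i j : ℕ, p = X (i, j) - X (j, i)} ∪
  {p | ∃ i j k l : ℕ,
    p = X (i, j) * X (k, l) - X (i + k, j + l) - X (i + l, j + k)}

/-- The ideal `I` of relations. -/
def UIdeal : Ideal (MvPolynomial (ℕ × ℕ) ℤ) := Ideal.span UgenSet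

/-- `R₁ = ℤ[T_{i,j} : (i,j) ∈ ℕ × ℕ]/I`. -/
abbrev UR1 : Type := MvPolynomial (ℕ × ℕ) ℤ ⧸ UIdeal

/-- The quotient map. -/
def Umk : MvPolynomial (ℕ × ℕ) ℤ →+* UR1 := Ideal.Quotient.mk _

/-- The class of `T_{i,j}` in `R₁`. -/
def Tcl (i j : ℕ) : UR1 := Umk (X (i, j))

/-- The proposed ℤ-basis of `R₁`: the class of `1` together with the classes of the
`T_{i,j}` for `i ≤ j`. -/
def UBasisFam : Option {p : ℕ × ℕ // p.1 ≤ p.2} → UR1 :=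
  fun o => o.elim 1 fun q => Tcl q.val.1 q.val.2

/-- The ring homomorphism out of `R₁` determined by a family `t` satisfying the relations. -/
def Ulift {A : Type*} [CommRing A] (t : ℕ → ℕ → A) (hs : ∀ i j, t i j = t j i)
    (hm : ∀ i j k l, t i j * t k l = t (i + k) (j + l) + t (i + l) (j + k)) : UR1 →+* A :=
  Ideal.Quotient.lift UIdeal (aeval (R := ℤ) fun p : ℕ × ℕ => t p.1 p.2).toRingHom (by
    intro a ha
    have hle : UIdeal ≤ RingHom.ker (aeval (R := ℤ) fun p : ℕ × ℕ => t p.1 p.2).toRingHom := by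
      refine Ideal.span_le.2 ?_
      rintro _ (⟨i, j, rfl⟩ | ⟨i, j, k, l, rfl⟩)
      · simp [RingHom.mem_ker, hs i j]
      · simp [RingHom.mem_ker, hm i j k l]
    exact hle ha)

lemma Ulift_Tcl {A : Type*} [CommRing A] (t : ℕ → ℕ → A) (hs : ∀ i j, t i j = t j i)
    (hm : ∀ i j k l, t i j * t k l = t (i + k) (j + l) + t (i + l) (j + k)) (i j : ℕ) :
    Ulift t hs hm (Tcl i j) = t i j := by
  simp [Ulift, Tcl, Umk]

/-- The augmentation `R₁ → ℤ` sending every `T_{i,j}` to `0`. -/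
def Uaug : UR1 →+* ℤ := Ulift (fun _ _ => 0) (by simp) (by simp)

/-- The homomorphism `T_{i,j} ↦ xⁱyʲ + xʲyⁱ`, with `ℤ[x, y]` encoded as the monoid algebra of
the exponent monoid `ℕ × ℕ`. -/
def Usym : UR1 →+* AddMonoidAlgebra ℤ (ℕ × ℕ) :=
  Ulift (fun i j => AddMonoidAlgebra.single (i, j) 1 + AddMonoidAlgebra.single (j, i) 1)
    (fun i j => add_comm _ _) (by
      intro i j k l
      simp only [add_mul, mul_add, AddMonoidAlgebra.single_mul_single, Prod.mk_add_mk, mul_one]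
      abel)

lemma Tcl_symm (i j : ℕ) : Tcl i j = Tcl j i :=
  Ideal.Quotient.eq.2 (Ideal.subset_span (Or.inl ⟨i, j, rfl⟩))

lemma Tcl_mul (i j k l : ℕ) :
    Tcl i j * Tcl k l = Tcl (i + k) (j + l) + Tcl (i + l) (j + k) := by
  simp only [Tcl, ← map_mul, ← map_add]
  refine Ideal.Quotient.eq.2 (Ideal.subset_span (Or.inr ⟨i, j, k, l, ?_⟩))
  ring

lemma Tcl_mem_span (i j : ℕ) : Tcl i j ∈ Submodule.span ℤ (Set.range UBasisFam) := by
  rcases le_total i j with h | h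
  · exact Submodule.subset_span ⟨some ⟨(i, j), h⟩, rfl⟩
  · rw [Tcl_symm]
    exact Submodule.subset_span ⟨some ⟨(j, i), h⟩, rfl⟩

lemma mul_Tcl_mem_span {x : UR1} (hx : x ∈ Submodule.span ℤ (Set.range UBasisFam)) (k l : ℕ) :
    x * Tcl k l ∈ Submodule.span ℤ (Set.range UBasisFam) := by
  induction hx using Submodule.span_induction with
  | mem x h =>
    obtain ⟨o, rfl⟩ := h
    cases o with
    | none => simpa [UBasisFam] using Tcl_mem_span k l
    | some q =>
      simp only [UBasisFam, Option.elim, Tcl_mul]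
      exact add_mem (Tcl_mem_span _ _) (Tcl_mem_span _ _)
  | zero => simp
  | add x y _ _ hx hy => rw [add_mul]; exact add_mem hx hy
  | smul a x _ hx => rw [smul_mul_assoc]; exact Submodule.smul_mem _ a hx

/-- `xⁱyʲ` with `i ≤ j` occurs in the image of `T_{k,l}`, `k ≤ l`, exactly when `(k,l) = (i,j)`. -/
lemma coeff_Usym_Tcl (p q : {p : ℕ × ℕ // p.1 ≤ p.2}) :
    (Usym (Tcl q.1.1 q.1.2)).coeff p.1 = 0 ↔ q ≠ p := by
  obtain ⟨⟨i, j⟩, hp⟩ := p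
  obtain ⟨⟨k, l⟩, hq⟩ := q
  simp only [Usym, Ulift_Tcl, AddMonoidAlgebra.coeff_add, AddMonoidAlgebra.coeff_single,
    Finsupp.add_apply, Finsupp.single_apply, Prod.mk.injEq, ne_eq, Subtype.mk.injEq]
  simp only at hp hq
  split_ifs <;> simp <;> omega

/-- The ring `ℤ[T_{i,j} : (i,j) ∈ ℕ × ℕ]/I` is free as a ℤ-module, with basis the class
of `1` together with the classes of the `T_{i,j}` for `i ≤ j`. -/
theorem UR1_free_with_basis :
    LinearIndependent ℤ UBasisFam ∧
    Submodule.span ℤ (Set.range UBasisFam) = ⊤ := by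
  constructor
  · rw [linearIndependent_iff']
    intro s g hg
    have h_none : none ∈ s → g none = 0 := by
      intro hs
      have h := congrArg Uaug hg
      rw [map_sum, map_zero, Finset.sum_eq_single_of_mem none hs] at h
      · simpa [UBasisFam] using h
      · rintro (_ | q) _ hq
        · exact absurd rfl hq
        · simp [UBasisFam, Uaug, Ulift_Tcl]
    rintro (_ | p) hp
    · exact h_none hp
    · have h := congrArg (fun x => (Usym x).coeff p.1) hg
      simp only [map_sum, map_zero, AddMonoidAlgebra.coeff_sum, Finsupp.finsetSum_apply] at h
      rw [Finset.sum_eq_single_of_mem (some p) hp] at h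
      · simp only [UBasisFam, Option.elim, map_zsmul, AddMonoidAlgebra.coeff_smul,
          Finsupp.smul_apply, AddMonoidAlgebra.coeff_zero, Finsupp.zero_apply] at h
        exact (smul_eq_zero.1 h).resolve_right fun h0 => (coeff_Usym_Tcl p p).1 h0 rfl
      · rintro (_ | q) hs hq
        · simp [h_none hs]
        · have hc := (coeff_Usym_Tcl p q).2 fun e => hq (congrArg some e)
          simp only [UBasisFam, Option.elim, map_zsmul, AddMonoidAlgebra.coeff_smul,
            Finsupp.smul_apply, hc, smul_zero]
  · rw [eq_top_iff]
    rintro x -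
    obtain ⟨f, rfl⟩ := Ideal.Quotient.mk_surjective x
    induction f using MvPolynomial.induction_on with
    | C a =>
      have h1 : (1 : UR1) ∈ Submodule.span ℤ (Set.range UBasisFam) :=
        Submodule.subset_span ⟨none, rfl⟩
      simpa using Submodule.smul_mem _ a h1
    | add p q hp hq => rw [map_add]; exact add_mem hp hq
    | mul_X p n hp => rw [map_mul]; exact mul_Tcl_mem_span hp n.1 n.2

end
end
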